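/- arXiv:1604.06247 — 2 statements merged into one kernel-verified Lean document; each statement's English description precedes it below -/
import Mathlib

section
/- Let R be a commutative ring and A an m×m matrix over R such that det(A) is not a zero divisor. Then ann(coker A) = I_m(A) : I_{m-1}(A), the ideal quotient of the determinant ideal by the ideal of (m−1)×(m−1) minors. -/
/-- The annihilator of the cokernel of (the linear map defined by) a matrix. -/
def Matrix.annCoker {R : Type*} [CommRing R] {m n : Type*} [Fintype n] [Fintype m]
    (A : Matrix m n R) : Ideal R :=
  Module.annihilator R ((m → R) ⧸ LinearMap.range A.mulVecLin)

/-- The determinantal ideal `I_j(A)` generated by all `j × j` minors of `A`. -/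
def Matrix.minorsIdeal {R : Type*} [CommRing R] {m n : ℕ}
    (A : Matrix (Fin m) (Fin n) R) (j : ℕ) : Ideal R :=
  Ideal.span { d | ∃ (r : Fin j → Fin m) (c : Fin j → Fin n), d = (A.submatrix r c).det }

/-! An element `f` kills `coker A` exactly when `f • 1 = A * B` for some matrix `B`. Multiplying by
`adj A`, and cancelling `det A` for the converse, turns this equation into
`det A • B = f • adj A`, which is solvable in `B` if and only if `det A` divides `f` times every
entry of `adj A`. Up to sign, those entries are the minors of `A` with one row and one column
deleted, and they generate `I_{m-1}(A)`. -/

section AnnCoker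

variable {R m n : Type*} [CommRing R] [Fintype m] [Fintype n]

theorem mem_annCoker_iff_forall_smul_mem_range {A : Matrix m n R} {f : R} :
    f ∈ A.annCoker ↔ ∀ v, f • v ∈ LinearMap.range A.mulVecLin := by
  simp only [Matrix.annCoker, Submodule.annihilator_quotient, Submodule.mem_colon, Set.mem_univ,
    forall_const]

theorem mem_annCoker_iff_exists_mul_eq_smul_one [DecidableEq m] {A : Matrix m n R} {f : R} :
    f ∈ A.annCoker ↔ ∃ B : Matrix n m R, A * B = f • (1 : Matrix m m R) := by
  rw [mem_annCoker_iff_forall_smul_mem_range]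
  constructor
  · intro h
    choose w hw using fun j ↦ h (Pi.single j 1)
    refine ⟨(Matrix.of w).transpose, Matrix.ext_of_mulVec_single fun j ↦ ?_⟩
    rw [← Matrix.mulVec_mulVec, Matrix.mulVec_single_one, Matrix.smul_mulVec, Matrix.one_mulVec]
    exact hw j
  · rintro ⟨B, hB⟩ v
    exact ⟨B.mulVec v, by
      rw [Matrix.mulVecLin_apply, Matrix.mulVec_mulVec, hB, Matrix.smul_mulVec, Matrix.one_mulVec]⟩

variable [DecidableEq n]

theorem mul_eq_smul_one_iff_det_smul_eq_smul_adjugate {A B : Matrix n n R} {f : R}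
    (hdet : A.det ∈ nonZeroDivisors R) :
    A * B = f • (1 : Matrix n n R) ↔ A.det • B = f • A.adjugate := by
  constructor
  · intro h
    calc A.det • B = A.adjugate * (A * B) := by
          rw [← Matrix.mul_assoc, Matrix.adjugate_mul, Matrix.smul_mul, Matrix.one_mul]
      _ = f • A.adjugate := by rw [h, Matrix.mul_smul, Matrix.mul_one]
  · intro h
    have hcancel : A.det • (A * B) = A.det • f • (1 : Matrix n n R) := by
      rw [← Matrix.mul_smul, h, Matrix.mul_smul, Matrix.mul_adjugate, smul_comm]
    ext i j
    exact (mul_cancel_left_mem_nonZeroDivisors hdet).mp (congrFun₂ hcancel i j)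

theorem annCoker_eq_span_det_colon_adjugate (A : Matrix n n R) (hdet : A.det ∈ nonZeroDivisors R) :
    A.annCoker =
      (Ideal.span {A.det}).colon (Set.range fun p : n × n ↦ A.adjugate p.1 p.2) := by
  ext f
  simp only [mem_annCoker_iff_exists_mul_eq_smul_one,
    mul_eq_smul_one_iff_det_smul_eq_smul_adjugate hdet, Submodule.mem_colon, Set.forall_mem_range,
    Prod.forall, smul_eq_mul, Ideal.mem_span_singleton]
  constructor
  · rintro ⟨B, hB⟩ i j
    exact ⟨B i j, (congrFun₂ hB i j).symm⟩
  · intro h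
    choose B hB using h
    exact ⟨Matrix.of B, Matrix.ext fun i j ↦ (hB i j).symm⟩

end AnnCoker

section MinorsIdeal

variable {R : Type*} [CommRing R]

theorem det_dvd_det_submatrix {n : Type*} [Fintype n] [DecidableEq n] (A : Matrix n n R)
    (r c : n → n) : A.det ∣ (A.submatrix r c).det := by
  have hfactor : A.submatrix r c =
      (1 : Matrix n n R).submatrix r id * A * (1 : Matrix n n R).submatrix id c := by
    ext i j
    simp [Matrix.mul_apply, Matrix.one_apply]
  rw [hfactor, Matrix.det_mul, Matrix.det_mul]
  exact (dvd_mul_left _ _).mul_right _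

theorem minorsIdeal_self {m : ℕ} (A : Matrix (Fin m) (Fin m) R) :
    A.minorsIdeal m = Ideal.span {A.det} := by
  apply le_antisymm
  · rw [Matrix.minorsIdeal, Ideal.span_le]
    rintro _ ⟨r, c, rfl⟩
    exact Ideal.mem_span_singleton.mpr (det_dvd_det_submatrix A r c)
  · rw [Ideal.span_singleton_le_iff_mem]
    exact Ideal.subset_span ⟨id, id, by rw [Matrix.submatrix_id_id]⟩

theorem exists_eq_succAbove_comp {k : ℕ} (r : Fin k → Fin (k + 1)) :
    ∃ (i : Fin (k + 1)) (r' : Fin k → Fin k), r = i.succAbove ∘ r' := by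
  have hr : ¬ Function.Surjective r := fun h ↦ by
    simpa using Fintype.card_le_of_surjective r h
  obtain ⟨i, hi⟩ := not_forall.mp hr
  choose r' hr' using fun a ↦ Fin.exists_succAbove_eq (not_exists.mp hi a)
  exact ⟨i, r', funext fun a ↦ (hr' a).symm⟩

theorem associated_adjugate_det_submatrix_succAbove {k : ℕ}
    (A : Matrix (Fin (k + 1)) (Fin (k + 1)) R) (i j : Fin (k + 1)) :
    Associated (A.adjugate i j) (A.submatrix j.succAbove i.succAbove).det := by
  rw [Matrix.adjugate_fin_succ_eq_det_submatrix]
  exact associated_unit_mul_left _ _ (isUnit_one.neg.pow _)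

theorem minorsIdeal_eq_span_adjugate {k : ℕ} (A : Matrix (Fin (k + 1)) (Fin (k + 1)) R) :
    A.minorsIdeal k =
      Ideal.span (Set.range fun p : Fin (k + 1) × Fin (k + 1) ↦ A.adjugate p.1 p.2) := by
  apply le_antisymm <;> rw [Matrix.minorsIdeal, Ideal.span_le]
  · rintro _ ⟨r, c, rfl⟩
    obtain ⟨i, r', rfl⟩ := exists_eq_succAbove_comp r
    obtain ⟨j, c', rfl⟩ := exists_eq_succAbove_comp c
    have hdvd : A.adjugate j i ∣ (A.submatrix (i.succAbove ∘ r') (j.succAbove ∘ c')).det :=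
      (associated_adjugate_det_submatrix_succAbove A j i).dvd.trans
        (det_dvd_det_submatrix (A.submatrix i.succAbove j.succAbove) r' c')
    exact Ideal.mem_of_dvd _ hdvd (Ideal.subset_span ⟨(j, i), rfl⟩)
  · rintro _ ⟨⟨i, j⟩, rfl⟩
    exact Ideal.mem_of_dvd _ (associated_adjugate_det_submatrix_succAbove A i j).symm.dvd
      (Ideal.subset_span ⟨_, _, rfl⟩)

end MinorsIdeal

theorem stmt5 {R : Type*} [CommRing R] {m : ℕ} (A : Matrix (Fin m) (Fin m) R)
    (hdet : A.det ∈ nonZeroDivisors R) :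
    A.annCoker = Submodule.colon (A.minorsIdeal m) (A.minorsIdeal (m - 1)) := by
  rw [annCoker_eq_span_det_colon_adjugate A hdet, minorsIdeal_self]
  cases m with
  | zero =>
    -- `m - 1` truncates to `0`, so `I_{m-1}(A)` is the unit ideal, not the span of the (empty)
    -- family of entries of `adj A`.
    rw [Matrix.det_fin_zero, Ideal.span_singleton_one, Submodule.top_colon, Submodule.top_colon]
  | succ k =>
    rw [Nat.add_sub_cancel, minorsIdeal_eq_span_adjugate, Ideal.colon_span]
end

section
/- Let R be a commutative ring and φ : E → F a map of finite free R-modules with rank(F) = m. For 1 ≤ j ≤ m, ann.coker_j(φ) ⊆ I_j(φ) : I_{j-1}(φ). In particular, if I_{j-1}(φ) contains a non-zerodivisor modulo I_j(φ), then ann.coker_j(φ) = I_j(φ) : I_{j-1}(φ). -/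
/-- The generalized annihilator-of-cokernel
`ann.coker_j(A) := ann (Λ^{m+1-j} (coker A))`. -/
def Matrix.annCokerJ {R : Type*} [CommRing R] {m n : ℕ}
    (A : Matrix (Fin m) (Fin n) R) (j : ℕ) : Ideal R :=
  Module.annihilator R ↥(⋀[R]^(m + 1 - j) ((Fin m → R) ⧸ LinearMap.range A.mulVecLin))

/-!
Let `C` be the cokernel of the matrix `A`.

For the first inclusion, an `i × i` minor on rows `r` and columns `c` is the determinant, up to
reordering the rows, of the columns `c` of `A` completed by standard basis vectors off `r`. Seen as
a function of the completing vectors and taken modulo `I_{i+1}(A)`, that determinant is an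
alternating form which vanishes as soon as one of its arguments lies in the image of `A`. Hence it
descends to `C`, and whatever kills `⋀ᵖ C` kills its values.

For the equality, let `δ` be a `j × j` minor of `A`, regarded as the value of a `j`-form `d` on
columns of `A`. The shuffle product of `d` with `⋀ᵖ π`, where `π : Rᵐ → C` is the projection and
`j + p > m`, is an alternating map in more than `m` arguments, so it vanishes. On `j` columns of `A`
followed by `p` vectors only the unshuffled term survives, because `π` kills the columns. So `δ`
kills `⋀ᵖ C`, that is `I_j(A) ⊆ ann ⋀ᵖ C`, while a non-zerodivisor in `I_{j-1}(A)` modulo `I_j(A)`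
forces `I_j(A) : I_{j-1}(A) = I_j(A)`.
-/

open scoped TensorProduct

theorem exists_sumEquiv_extending {ι κ α : Type*} [Fintype ι] [Fintype κ] [Fintype α] {r : ι → α}
    (hr : Function.Injective r)
    (hcard : Fintype.card ι + Fintype.card κ = Fintype.card α) :
    ∃ e : ι ⊕ κ ≃ α, e ∘ Sum.inl = r := by
  classical
  have card_compl : Fintype.card κ = Fintype.card ↥(Set.range r)ᶜ := by
    rw [Fintype.card_compl_set, Set.card_range_of_injective hr, ← hcard, Nat.add_sub_cancel_left]
  refine ⟨((Equiv.ofInjective r hr).sumCongr (Fintype.equivOfCardEq card_compl)).trans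
    (Equiv.Set.sumCompl _), ?_⟩
  ext a
  simp

section AlternatingMaps

variable {R M P N Q ι κ : Type*} [CommRing R] [AddCommGroup M] [Module R M]
  [AddCommGroup P] [Module R P] [AddCommGroup N] [Module R N] [AddCommGroup Q] [Module R Q]

theorem multilinearMap_congr_of_forall_sub_mem [Finite ι] {E : ι → Type*}
    [∀ i, AddCommGroup (E i)] [∀ i, Module R (E i)] (K : ∀ i, Submodule R (E i))
    (G : MultilinearMap R E Q) (hG : ∀ v i, v i ∈ K i → G v = 0) {v w : ∀ i, E i}
    (hvw : ∀ i, v i - w i ∈ K i) : G v = G w := by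
  classical
  have := Fintype.ofFinite ι
  have expand : G v = ∑ s : Finset ι, G (s.piecewise w (v - w)) := by
    rw [← G.map_add_univ, add_sub_cancel]
  rw [expand, Finset.sum_eq_single Finset.univ, Finset.piecewise_univ]
  · intro s _ hs
    obtain ⟨i, hi⟩ : ∃ i, i ∉ s := by simpa [Finset.eq_univ_iff_forall] using hs
    refine hG _ i ?_
    rw [Finset.piecewise_eq_of_notMem _ _ _ hi]
    exact hvw i
  · simp

/-- The alternating map obtained from `D` by fixing the first block of arguments to be `u`. It is
`MultilinearMap.currySum` for alternating maps, without the alternation in `u`. -/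
def alternatingPartialEval (D : M [⋀^ι ⊕ κ]→ₗ[R] Q) (u : ι → M) : M [⋀^κ]→ₗ[R] Q :=
  { D.toMultilinearMap.currySum u with
    map_eq_zero_of_eq' := fun _ _ _ hv hne =>
      D.map_eq_zero_of_eq _ hv (Sum.inr_injective.ne hne) }

theorem alternatingPartialEval_apply (D : M [⋀^ι ⊕ κ]→ₗ[R] Q) (u : ι → M) (v : κ → M) :
    alternatingPartialEval D u v = D (Sum.elim u v) :=
  rfl

theorem exists_compLinearMap_eq_of_surjective {π : M →ₗ[R] P} (hπ : Function.Surjective π)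
    (G : M [⋀^ι]→ₗ[R] Q) (hG : ∀ v w, (∀ i, π (v i) = π (w i)) → G v = G w) :
    ∃ G' : P [⋀^ι]→ₗ[R] Q, G'.compLinearMap π = G := by
  obtain ⟨s, hs⟩ := hπ.hasRightInverse
  refine ⟨{ toFun := fun v => G (s ∘ v)
            map_update_add' := fun v i x y => ?_
            map_update_smul' := fun v i a x => ?_
            map_eq_zero_of_eq' := fun v i k hv hik =>
              G.map_eq_zero_of_eq _ (congrArg s hv) hik }, ?_⟩
  · simp only [Function.comp_update, ← G.map_update_add]
    refine hG _ _ fun k => ?_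
    obtain rfl | hk := eq_or_ne k i
    · simp [hs _]
    · simp [hk]
  · simp only [Function.comp_update, ← G.map_update_smul]
    refine hG _ _ fun k => ?_
    obtain rfl | hk := eq_or_ne k i
    · simp [hs _]
    · simp [hk]
  · ext v
    exact hG _ _ fun i => hs _

theorem exists_compLinearMap_eq_of_vanishes_on_ker [Finite ι] {π : M →ₗ[R] P}
    (hπ : Function.Surjective π) (G : M [⋀^ι]→ₗ[R] Q) (hG : ∀ v i, v i ∈ π.ker → G v = 0) :
    ∃ G' : P [⋀^ι]→ₗ[R] Q, G'.compLinearMap π = G :=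
  exists_compLinearMap_eq_of_surjective hπ G fun _ _ hvw =>
    multilinearMap_congr_of_forall_sub_mem (fun _ => π.ker) G.toMultilinearMap hG fun i =>
      LinearMap.sub_mem_ker_iff.2 (hvw i)

theorem alternatingMap_eq_zero_of_card_lt {σ : Type*} [Fintype σ] [Fintype ι]
    (b : Module.Basis σ R M) (h : Fintype.card σ < Fintype.card ι) (f : M [⋀^ι]→ₗ[R] Q) :
    f = 0 :=
  b.ext_alternating fun v hv => absurd (Fintype.card_le_of_injective v hv) h.not_ge

theorem exists_apply_inr_eq_inl_of_notMem_range_sumCongrHom [Finite ι] [Finite κ]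
    {σ : Equiv.Perm (ι ⊕ κ)} (hσ : σ ∉ (Equiv.Perm.sumCongrHom ι κ).range) :
    ∃ k i, σ (Sum.inr k) = Sum.inl i := by
  contrapose! hσ
  have mapsTo_inl : Set.MapsTo (σ⁻¹ : Equiv.Perm (ι ⊕ κ)) (Set.range Sum.inl)
      (Set.range Sum.inl) := by
    rintro _ ⟨i, rfl⟩
    rcases h : σ⁻¹ (Sum.inl i) with i' | k
    · exact ⟨i', rfl⟩
    · exact absurd (Equiv.Perm.inv_eq_iff_eq.1 h).symm (hσ k i)
  exact inv_mem_iff.1 (Equiv.Perm.mem_sumCongrHom_range_of_perm_mapsTo_inl mapsTo_inl)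

variable [Fintype ι] [Fintype κ]

theorem domCoprod_compLinearMap_sumElim [DecidableEq ι] [DecidableEq κ] {π : M →ₗ[R] P}
    (d : M [⋀^ι]→ₗ[R] N) (W : P [⋀^κ]→ₗ[R] Q) {u : ι → M} (hu : ∀ i, π (u i) = 0) (v : κ → M) :
    d.domCoprod (W.compLinearMap π) (Sum.elim u v) = d u ⊗ₜ[R] W (fun k => π (v k)) := by
  rw [AlternatingMap.domCoprod_apply, sum_apply]
  refine (Finset.sum_eq_single (M := N ⊗[R] Q)
    (Quotient.mk'' (1 : Equiv.Perm (ι ⊕ κ)) : Equiv.Perm.ModSumCongr ι κ) ?_ (by simp)).trans ?_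
  · intro σ _ hσ
    induction σ using Quotient.inductionOn' with | _ σ
    have hσ' : σ ∉ (Equiv.Perm.sumCongrHom ι κ).range := fun h =>
      hσ (QuotientGroup.eq.2 (by simpa using h))
    obtain ⟨k, i, hki⟩ := exists_apply_inr_eq_inl_of_notMem_range_sumCongrHom hσ'
    have hW : W (fun k => π (Sum.elim u v (σ (Sum.inr k)))) = 0 :=
      W.map_coord_zero k (by rw [hki, Sum.elim_inl, hu])
    simp [AlternatingMap.domCoprod.summand_mk'', hW]
  · simp [AlternatingMap.domCoprod.summand_mk'']

theorem smul_apply_eq_zero_of_card_lt {σ : Type*} [Fintype σ] (b : Module.Basis σ R M)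
    (hcard : Fintype.card σ < Fintype.card ι + Fintype.card κ) {π : M →ₗ[R] P}
    (hπ : Function.Surjective π) (d : M [⋀^ι]→ₗ[R] R) {u : ι → M} (hu : ∀ i, π (u i) = 0)
    (W : P [⋀^κ]→ₗ[R] Q) (w : κ → P) : d u • W w = 0 := by
  classical
  obtain ⟨v, rfl⟩ : ∃ v : κ → M, (fun k => π (v k)) = w := hπ.comp_left w
  have tmul_eq_zero : d u ⊗ₜ[R] W (fun k => π (v k)) = 0 := by
    rw [← domCoprod_compLinearMap_sumElim d W hu,
      alternatingMap_eq_zero_of_card_lt b (by rwa [Fintype.card_sum]) (d.domCoprod _),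
      AlternatingMap.zero_apply]
  rw [← TensorProduct.lid_tmul, tmul_eq_zero, map_zero]

end AlternatingMaps

section ExteriorPowerAnnihilator

variable {R M P Q : Type*} [CommRing R] [AddCommGroup M] [Module R M]
  [AddCommGroup P] [Module R P] [AddCommGroup Q] [Module R Q] {p : ℕ} {f : R}

theorem mem_annihilator_exteriorPower_iff :
    f ∈ Module.annihilator R (⋀[R]^p P) ↔ ∀ w : Fin p → P, f • exteriorPower.ιMulti R p w = 0 := by
  rw [← Submodule.annihilator_top, ← exteriorPower.ιMulti_span, Submodule.mem_annihilator_span,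
    Set.forall_subtype_range_iff]

theorem smul_apply_eq_zero_of_mem_annihilator (hf : f ∈ Module.annihilator R (⋀[R]^p P))
    (G : P [⋀^Fin p]→ₗ[R] Q) (w : Fin p → P) : f • G w = 0 := by
  rw [← exteriorPower.alternatingMapLinearEquiv_apply_ιMulti, ← map_smul,
    mem_annihilator_exteriorPower_iff.1 hf, map_zero]

theorem smul_apply_eq_zero_of_vanishes_on_ker {π : M →ₗ[R] P} (hπ : Function.Surjective π)
    (hf : f ∈ Module.annihilator R (⋀[R]^p P)) (G : M [⋀^Fin p]→ₗ[R] Q)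
    (hG : ∀ v k, v k ∈ π.ker → G v = 0) (v : Fin p → M) : f • G v = 0 := by
  obtain ⟨G', rfl⟩ := exists_compLinearMap_eq_of_vanishes_on_ker hπ G hG
  exact smul_apply_eq_zero_of_mem_annihilator hf G' _

end ExteriorPowerAnnihilator

section MinorForm

variable {R μ ν ι κ : Type*} [CommRing R] [Fintype ι] [DecidableEq ι]

/-- The alternating form on `μ → R` that sends a family of column vectors to the determinant of the
matrix they form, restricted to the rows `r`; its values on columns of `A` are minors of `A`. -/
def minorForm (r : ι → μ) : (μ → R) [⋀^ι]→ₗ[R] R :=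
  Matrix.detRowAlternating.compLinearMap (LinearMap.funLeft R R r)

theorem minorForm_apply (r : ι → μ) (v : ι → μ → R) :
    minorForm r v = (Matrix.of fun a b => v b (r a)).det := by
  rw [← Matrix.det_transpose]
  rfl

theorem minorForm_col (A : Matrix μ ν R) (r : ι → μ) (c : ι → ν) :
    minorForm r (fun a => A.col (c a)) = (A.submatrix r c).det :=
  minorForm_apply _ _

theorem minorForm_sumElim_single [Fintype κ] [DecidableEq κ] [DecidableEq μ] {e : ι ⊕ κ → μ}
    (he : Function.Injective e) (u : ι → μ → R) :
    minorForm e (Sum.elim u fun k => Pi.single (e (Sum.inr k)) 1) =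
      minorForm (e ∘ Sum.inl) u := by
  have block_form : (Matrix.of fun a b =>
      Sum.elim u (fun k => Pi.single (e (Sum.inr k)) (1 : R)) b (e a)) =
      Matrix.fromBlocks (Matrix.of fun a b => u b (e (Sum.inl a))) 0
        (Matrix.of fun k b => u b (e (Sum.inr k))) 1 := by
    ext (a | a) (b | b) <;> simp [Pi.single_apply, Matrix.one_apply, he.eq_iff]
  rw [minorForm_apply, block_form, Matrix.det_fromBlocks_zero₁₂, Matrix.det_one, mul_one,
    minorForm_apply]
  rfl

end MinorForm

section MinorsIdeal

variable {R : Type*} [CommRing R] {m n k l : ℕ}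

theorem det_submatrix_mem_minorsIdeal (A : Matrix (Fin m) (Fin n) R) {j : ℕ} (r : Fin j → Fin m)
    (c : Fin j → Fin n) : (A.submatrix r c).det ∈ A.minorsIdeal j :=
  Ideal.subset_span ⟨r, c, rfl⟩

theorem minorsIdeal_le_iff {A : Matrix (Fin m) (Fin n) R} {j : ℕ} {I : Ideal R} :
    A.minorsIdeal j ≤ I ↔
      ∀ (r : Fin j → Fin m) (c : Fin j → Fin n), (A.submatrix r c).det ∈ I := by
  refine Ideal.span_le.trans ⟨fun h r c => h ⟨r, c, rfl⟩, ?_⟩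
  rintro h _ ⟨r, c, rfl⟩
  exact h r c

theorem minorsIdeal_submatrix_le (A : Matrix (Fin m) (Fin n) R) (r : Fin k → Fin m)
    (c : Fin l → Fin n) (j : ℕ) : (A.submatrix r c).minorsIdeal j ≤ A.minorsIdeal j :=
  minorsIdeal_le_iff.2 fun r' c' => det_submatrix_mem_minorsIdeal A (r ∘ r') (c ∘ c')

theorem minorsIdeal_mul_le (A : Matrix (Fin m) (Fin n) R) (B : Matrix (Fin n) (Fin l) R) (j : ℕ) :
    (A * B).minorsIdeal j ≤ A.minorsIdeal j := by
  refine minorsIdeal_le_iff.2 fun r c => ?_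
  have cols : (fun a => (A * B).col (c a)) = fun a => ∑ t, B t (c a) • A.col t := by
    ext a x
    simp [Matrix.mul_apply, mul_comm]
  have expand : ((A * B).submatrix r c).det =
      ∑ t : Fin j → Fin n, (∏ a, B (t a) (c a)) * (A.submatrix r t).det := by
    rw [← minorForm_col, cols]
    refine ((minorForm r).toMultilinearMap.map_sum _).trans (Finset.sum_congr rfl fun t _ => ?_)
    rw [← minorForm_col]
    exact (minorForm r).map_smul_univ _ _
  rw [expand]
  exact Ideal.sum_mem _ fun t _ => Ideal.mul_mem_left _ _ (det_submatrix_mem_minorsIdeal A r t)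

theorem det_mem_minorsIdeal_submatrix_id {j : ℕ} (B : Matrix (Fin k) (Fin k) R)
    {g : Fin j → Fin k} (hg : Function.Injective g) :
    B.det ∈ (B.submatrix id g).minorsIdeal j := by
  have hjk : j ≤ k := by simpa using Fintype.card_le_of_injective g hg
  induction k, hjk using Nat.le_induction with
  | base =>
    let e : Fin j ≃ Fin j := Equiv.ofBijective g (Finite.injective_iff_bijective.1 hg)
    have hB : (B.submatrix id g).submatrix id e.symm = B := by
      ext a b
      exact congrArg (B a) (e.apply_symm_apply b)
    simpa only [hB] using det_submatrix_mem_minorsIdeal (B.submatrix id g) id e.symm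
  | succ k hjk ih =>
    obtain ⟨t, ht⟩ : ∃ t, t ∉ Set.range g := by
      by_contra! hsurj
      have := Fintype.card_le_of_surjective g hsurj
      simp only [Fintype.card_fin] at this
      omega
    choose g' hg' using fun a => Fin.exists_succAbove_eq (fun h : g a = t => ht ⟨a, h⟩)
    have hg'_inj : Function.Injective g' := fun a b hab => hg (by rw [← hg' a, ← hg' b, hab])
    rw [Matrix.det_succ_column B t]
    refine Ideal.sum_mem _ fun s _ => Ideal.mul_mem_left _ _ ?_
    have minor_cols : (B.submatrix s.succAbove t.succAbove).submatrix id g' =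
        (B.submatrix id g).submatrix s.succAbove id := by
      ext a b
      simp [hg']
    refine minorsIdeal_submatrix_le (B.submatrix id g) s.succAbove id j ?_
    rw [← minor_cols]
    exact ih _ hg'_inj

theorem det_mem_minorsIdeal_of_submatrix_eq {κ : Type*} [Fintype κ] [DecidableEq κ]
    (A : Matrix (Fin m) (Fin n) R) (B : Matrix κ κ R) {j : ℕ} {g : Fin j → κ}
    (hg : Function.Injective g) {r : κ → Fin m} {c : Fin j → Fin n}
    (hB : B.submatrix id g = A.submatrix r c) : B.det ∈ A.minorsIdeal j := by
  let e := Fintype.equivFin κ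
  have reindexed : (B.submatrix e.symm e.symm).submatrix id (e ∘ g) =
      A.submatrix (r ∘ e.symm) c := by
    ext a b
    simpa using congrFun₂ hB (e.symm a) b
  rw [← Matrix.det_submatrix_equiv_self e.symm B]
  refine minorsIdeal_submatrix_le A (r ∘ e.symm) c j ?_
  rw [← reindexed]
  exact det_mem_minorsIdeal_submatrix_id _ (e.injective.comp hg)

theorem minorForm_mem_minorsIdeal {κ : Type*} [Fintype κ] [DecidableEq κ]
    (A : Matrix (Fin m) (Fin n) R) (r : κ → Fin m) {v : κ → Fin m → R} {j : ℕ} {g : Fin j → κ}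
    (hg : Function.Injective g) (hv : ∀ a, v (g a) ∈ A.mulVecLin.range) :
    minorForm r v ∈ A.minorsIdeal j := by
  choose x hx using hv
  rw [minorForm_apply]
  refine minorsIdeal_mul_le A (Matrix.of fun t a => x a t) j
    (det_mem_minorsIdeal_of_submatrix_eq _ _ hg (r := r) (c := id) ?_)
  ext b a
  exact (congrFun (hx a) (r b)).symm

theorem colon_le_of_mk_mem_nonZeroDivisors {I J : Ideal R} {x : R} (hxJ : x ∈ J)
    (hx : Ideal.Quotient.mk I x ∈ nonZeroDivisors (R ⧸ I)) : Submodule.colon I J ≤ I := by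
  intro f hf
  have hfx : f * x ∈ I := Submodule.mem_colon.1 hf x hxJ
  rw [← Ideal.Quotient.eq_zero_iff_mem, map_mul] at hfx
  exact Ideal.Quotient.eq_zero_iff_mem.1 ((mul_right_mem_nonZeroDivisors_eq_zero_iff hx).1 hfx)

end MinorsIdeal

section AnnihilatorOfCokernel

variable {R : Type*} [CommRing R] {m n : ℕ}

theorem col_mem_range_mulVecLin {μ ν : Type*} [Fintype ν] (A : Matrix μ ν R) (t : ν) :
    A.col t ∈ A.mulVecLin.range := by
  rw [Matrix.range_mulVecLin]
  exact Submodule.subset_span ⟨t, rfl⟩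

theorem minorsIdeal_le_annihilator (A : Matrix (Fin m) (Fin n) R) {j p : ℕ} (h : m < j + p) :
    A.minorsIdeal j ≤ Module.annihilator R (⋀[R]^p ((Fin m → R) ⧸ A.mulVecLin.range)) := by
  refine minorsIdeal_le_iff.2 fun r c => mem_annihilator_exteriorPower_iff.2 fun w => ?_
  have mkQ_col : ∀ a, A.mulVecLin.range.mkQ (A.col (c a)) = 0 := fun a =>
    (Submodule.Quotient.mk_eq_zero _).2 (col_mem_range_mulVecLin A (c a))
  rw [← minorForm_col]
  exact smul_apply_eq_zero_of_card_lt (Pi.basisFun R (Fin m)) (by simpa using h)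
    (Submodule.mkQ_surjective _) (minorForm r) mkQ_col (exteriorPower.ιMulti R p) w

theorem mul_det_submatrix_mem_minorsIdeal (A : Matrix (Fin m) (Fin n) R) {i p : ℕ} (h : i + p = m)
    {f : R} (hf : f ∈ Module.annihilator R (⋀[R]^p ((Fin m → R) ⧸ A.mulVecLin.range)))
    {r : Fin i → Fin m} (hr : Function.Injective r) (c : Fin i → Fin n) :
    f * (A.submatrix r c).det ∈ A.minorsIdeal (i + 1) := by
  obtain ⟨e, he⟩ : ∃ e : Fin i ⊕ Fin p ≃ Fin m, e ∘ Sum.inl = r :=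
    exists_sumEquiv_extending hr (by simpa using h)
  let cols : Fin i → Fin m → R := fun a => A.col (c a)
  let G : (Fin m → R) [⋀^Fin p]→ₗ[R] (R ⧸ A.minorsIdeal (i + 1)) :=
    (A.minorsIdeal (i + 1)).mkQ.compAlternatingMap (alternatingPartialEval (minorForm e) cols)
  have G_vanishes : ∀ v k, v k ∈ A.mulVecLin.range.mkQ.ker → G v = 0 := by
    intro v k hv
    rw [Submodule.ker_mkQ] at hv
    have form_mem : minorForm e (Sum.elim cols v) ∈ A.minorsIdeal (i + 1) :=
      minorForm_mem_minorsIdeal A e (g := Fin.cons (Sum.inr k) Sum.inl)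
        (Fin.cons_injective_iff.2 ⟨by simp, Sum.inl_injective⟩)
        (Fin.cases hv fun a => col_mem_range_mulVecLin A (c a))
    exact (Submodule.Quotient.mk_eq_zero _).2 form_mem
  have annihilates := smul_apply_eq_zero_of_vanishes_on_ker (Submodule.mkQ_surjective _) hf G
    G_vanishes fun k => Pi.single (e (Sum.inr k)) 1
  rw [LinearMap.compAlternatingMap_apply, ← map_smul, Submodule.mkQ_apply,
    Submodule.Quotient.mk_eq_zero, alternatingPartialEval_apply,
    minorForm_sumElim_single e.injective, he, minorForm_col] at annihilates
  exact annihilates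

theorem annihilator_le_colon (A : Matrix (Fin m) (Fin n) R) {i p : ℕ} (h : i + p = m) :
    Module.annihilator R (⋀[R]^p ((Fin m → R) ⧸ A.mulVecLin.range)) ≤
      Submodule.colon (A.minorsIdeal (i + 1)) (A.minorsIdeal i) := by
  intro f hf
  rw [Matrix.minorsIdeal.eq_def A i, Ideal.colon_span, Submodule.mem_colon]
  rintro _ ⟨r, c, rfl⟩
  by_cases hr : Function.Injective r
  · exact mul_det_submatrix_mem_minorsIdeal A h hf hr c
  · obtain ⟨a, b, hab, hne⟩ := Function.not_injective_iff.1 hr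
    rw [Matrix.det_zero_of_row_eq hne (by ext; simp [hab]), smul_zero]
    exact zero_mem _

end AnnihilatorOfCokernel

theorem stmt12 {R : Type*} [CommRing R] {m n : ℕ}
    (A : Matrix (Fin m) (Fin n) R) (j : ℕ) (hj1 : 1 ≤ j) (hjm : j ≤ m) :
    A.annCokerJ j ≤ Submodule.colon (A.minorsIdeal j) (A.minorsIdeal (j - 1)) ∧
      ((∃ x ∈ A.minorsIdeal (j - 1),
          Ideal.Quotient.mk (A.minorsIdeal j) x ∈ nonZeroDivisors (R ⧸ A.minorsIdeal j)) →
        A.annCokerJ j = Submodule.colon (A.minorsIdeal j) (A.minorsIdeal (j - 1))) := by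
  have ann_le_colon : A.annCokerJ j ≤
      Submodule.colon (A.minorsIdeal j) (A.minorsIdeal (j - 1)) := by
    obtain ⟨i, rfl⟩ := Nat.exists_eq_add_of_le' hj1
    exact annihilator_le_colon A (by omega)
  have minors_le_ann : A.minorsIdeal j ≤ A.annCokerJ j :=
    minorsIdeal_le_annihilator A (by omega)
  refine ⟨ann_le_colon, ?_⟩
  rintro ⟨x, hx_mem, hx_nzd⟩
  exact le_antisymm ann_le_colon
    ((colon_le_of_mk_mem_nonZeroDivisors hx_mem hx_nzd).trans minors_le_ann)
end
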